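/- In the regular representation of the group algebra ℂ[S(m)], the Jucys-Murphy element J_m = Σ_{a=1}^{m-1}(a m) acts diagonalizably with eigenvalues γ_μ(α) = C(m,2)·χ^μ((12))/d_μ − C(m-1,2)·χ^α((12))/d_α, where μ runs over irreps of S(m) and α over irreducible components of the restriction of μ to S(m-1), and the multiplicity of the eigenvalue γ_μ(α) is d_μ · d_α. -/

import Mathlib

open Matrix
open scoped Classical

noncomputable section

/-- A matrix representation is irreducible iff it has no nontrivial invariant subspace. -/
def MatIrred {G : Type*} [Group G] {ι : Type*} [Fintype ι] [DecidableEq ι]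
    (ρ : G →* Matrix ι ι ℂ) : Prop :=
  ∀ W : Submodule ℂ (ι → ℂ), (∀ g : G, ∀ v ∈ W, (ρ g).mulVec v ∈ W) → W = ⊥ ∨ W = ⊤

/-- Inequivalence of two matrix representations: every intertwiner vanishes. -/
def MatInequiv {G : Type*} [Group G] {ι κ : Type*} [Fintype ι] [DecidableEq ι]
    [Fintype κ] [DecidableEq κ]
    (ρ : G →* Matrix ι ι ℂ) (π : G →* Matrix κ κ ℂ) : Prop :=
  ∀ S : Matrix ι κ ℂ, (∀ g : G, ρ g * S = S * π g) → S = 0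

/-!
By Schur orthogonality the Fourier transform identifies `ℂ[G]` with `∏ μ, Mat(d_μ)`, so an element
acting in every irrep by a diagonal matrix acts diagonalizably on the regular representation, each
diagonal entry of `ψ^μ` contributing `d_μ` to the multiplicity. The Jucys–Murphy element is the sum
of all transpositions of `S(m)` minus the sum of all transpositions of `S(m-1)`. Both are
conjugacy-class sums, which act on irreps by scalars computed from the trace, so in a basis adapted
to the restriction to `S(m-1)` their difference is diagonal with the entries `γ_μ(α)`.
-/

section Schur

variable {G ι κ : Type*} [Group G] [Fintype ι] [DecidableEq ι] [Fintype κ] [DecidableEq κ]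

theorem MatIrred.exists_eq_smul_one {ρ : G →* Matrix ι ι ℂ} (hρ : MatIrred ρ) {M : Matrix ι ι ℂ}
    (hM : ∀ g, ρ g * M = M * ρ g) : ∃ c : ℂ, M = c • (1 : Matrix ι ι ℂ) := by
  rcases isEmpty_or_nonempty ι with hι | hι
  · exact ⟨0, Subsingleton.elim _ _⟩
  obtain ⟨c, hc⟩ := Module.End.exists_eigenvalue (Matrix.toLin' M)
  have invariant : ∀ g, ∀ v ∈ Module.End.eigenspace (Matrix.toLin' M) c,
      ρ g *ᵥ v ∈ Module.End.eigenspace (Matrix.toLin' M) c := by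
    intro g v hv
    rw [Module.End.mem_eigenspace_iff, Matrix.toLin'_apply] at hv ⊢
    rw [Matrix.mulVec_mulVec, ← hM, ← Matrix.mulVec_mulVec, hv, Matrix.mulVec_smul]
  have eigenspace_eq_top := (hρ _ invariant).resolve_left hc
  refine ⟨c, Matrix.ext_of_mulVec_single fun i => ?_⟩
  have hi : Pi.single i 1 ∈ Module.End.eigenspace (Matrix.toLin' M) c :=
    eigenspace_eq_top ▸ Submodule.mem_top
  rwa [Module.End.mem_eigenspace_iff, Matrix.toLin'_apply, ← Matrix.one_mulVec (Pi.single i 1),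
    Matrix.mulVec_mulVec, Matrix.mul_one, ← Matrix.smul_mulVec] at hi

theorem MatIrred.eq_trace_div_card_smul_one {ρ : G →* Matrix ι ι ℂ} (hρ : MatIrred ρ)
    {M : Matrix ι ι ℂ} (hM : ∀ g, ρ g * M = M * ρ g) :
    M = (M.trace / (Fintype.card ι : ℂ)) • (1 : Matrix ι ι ℂ) := by
  obtain ⟨c, rfl⟩ := hρ.exists_eq_smul_one hM
  rcases isEmpty_or_nonempty ι with hι | hι
  · exact Subsingleton.elim _ _
  · have card_ne_zero : (Fintype.card ι : ℂ) ≠ 0 := mod_cast Fintype.card_ne_zero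
    rw [Matrix.trace_smul, Matrix.trace_one, smul_eq_mul, mul_div_cancel_right₀ _ card_ne_zero]

theorem trace_map_eq_of_isConj {R : Type*} [CommSemiring R] (ρ : G →* Matrix ι ι R) {s t : G}
    (hst : IsConj s t) : (ρ s).trace = (ρ t).trace := by
  obtain ⟨g, rfl⟩ := isConj_iff.1 hst
  rw [map_mul, Matrix.trace_mul_comm, ← map_mul, inv_mul_cancel_left]

theorem MatIrred.sum_isConj [Fintype G] {ρ : G →* Matrix ι ι ℂ} (hρ : MatIrred ρ) (t : G) :
    ∑ g with IsConj t g, ρ g =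
      (((Finset.univ.filter (IsConj t)).card : ℂ) * (ρ t).trace / (Fintype.card ι : ℂ)) •
        (1 : Matrix ι ι ℂ) := by
  have comm : ∀ h, ρ h * ∑ g with IsConj t g, ρ g = (∑ g with IsConj t g, ρ g) * ρ h := by
    intro h
    rw [Finset.mul_sum, Finset.sum_mul]
    refine Finset.sum_equiv (MulAut.conj h).toEquiv (fun g => ?_) fun g _ => ?_
    · have hg : IsConj g (h * g * h⁻¹) := isConj_iff.2 ⟨h, rfl⟩
      rw [Finset.mem_filter_univ, Finset.mem_filter_univ]
      exact ⟨fun ht => ht.trans hg, fun ht => ht.trans hg.symm⟩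
    · simp [← map_mul]
  have trace_sum : (∑ g with IsConj t g, ρ g).trace =
      ((Finset.univ.filter (IsConj t)).card : ℂ) * (ρ t).trace := by
    rw [Matrix.trace_sum, ← nsmul_eq_mul]
    exact Finset.sum_eq_card_nsmul fun g hg =>
      (trace_map_eq_of_isConj ρ (Finset.mem_filter.1 hg).2).symm
  rw [hρ.eq_trace_div_card_smul_one comm, trace_sum]

variable [Fintype G]

/-- The unnormalized average of `E` over `G`: the standard way of producing an intertwiner from `π`
to `ρ` out of an arbitrary matrix. -/
def intertwinerSum {R : Type*} [CommSemiring R] (ρ : G →* Matrix ι ι R) (π : G →* Matrix κ κ R)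
    (E : Matrix ι κ R) : Matrix ι κ R :=
  ∑ g, ρ g * E * π g⁻¹

theorem map_mul_intertwinerSum {R : Type*} [CommSemiring R] (ρ : G →* Matrix ι ι R)
    (π : G →* Matrix κ κ R) (E : Matrix ι κ R) (h : G) :
    ρ h * intertwinerSum ρ π E = intertwinerSum ρ π E * π h := by
  rw [intertwinerSum, Matrix.mul_sum, Matrix.sum_mul]
  refine Fintype.sum_equiv (Equiv.mulLeft h) _ _ fun g => ?_
  simp only [Equiv.coe_mulLeft, map_mul, _root_.mul_inv_rev, Matrix.mul_assoc]
  rw [← map_mul π h⁻¹, inv_mul_cancel, map_one, Matrix.mul_one]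

theorem intertwinerSum_single_apply {R : Type*} [CommSemiring R] (ρ : G →* Matrix ι ι R)
    (π : G →* Matrix κ κ R) (i k : ι) (j l : κ) :
    intertwinerSum ρ π (Matrix.single k l 1) i j = ∑ g, ρ g i k * π g⁻¹ l j := by
  rw [intertwinerSum, Matrix.sum_apply]
  refine Finset.sum_congr rfl fun g _ => ?_
  rw [Matrix.mul_assoc, Matrix.mul_apply, Finset.sum_eq_single k] <;>
    simp +contextual

theorem trace_intertwinerSum_self {R : Type*} [CommSemiring R] (ρ : G →* Matrix ι ι R)
    (E : Matrix ι ι R) : (intertwinerSum ρ ρ E).trace = (Fintype.card G : R) * E.trace := by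
  have trace_summand : ∀ g, (ρ g * E * ρ g⁻¹).trace = E.trace := fun g => by
    rw [Matrix.trace_mul_comm, ← Matrix.mul_assoc, ← map_mul, inv_mul_cancel, map_one,
      Matrix.one_mul]
  simp [intertwinerSum, Matrix.trace_sum, trace_summand]

theorem MatInequiv.sum_apply_mul_apply_inv {ρ : G →* Matrix ι ι ℂ} {π : G →* Matrix κ κ ℂ}
    (h : MatInequiv ρ π) (i k : ι) (j l : κ) : ∑ g, ρ g i k * π g⁻¹ l j = 0 := by
  rw [← intertwinerSum_single_apply, h _ (map_mul_intertwinerSum ρ π _), Matrix.zero_apply]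

theorem MatIrred.sum_apply_mul_apply_inv {ρ : G →* Matrix ι ι ℂ} (hρ : MatIrred ρ) (i k j l : ι) :
    ∑ g, ρ g i k * ρ g⁻¹ l j =
      (Fintype.card G : ℂ) / (Fintype.card ι : ℂ) * Matrix.single j l (1 : ℂ) i k := by
  rw [← intertwinerSum_single_apply,
    hρ.eq_trace_div_card_smul_one (map_mul_intertwinerSum ρ ρ _), trace_intertwinerSum_self]
  by_cases hkl : k = l
  · subst hkl
    simp [Matrix.single_apply, Matrix.one_apply, eq_comm]
  · simp [Matrix.trace_single_eq_of_ne _ _ _ hkl, Ne.symm hkl]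

end Schur

section FourierTransform

variable {G I : Type*} [Group G] {ι : I → Type*} [∀ μ, Fintype (ι μ)] [∀ μ, DecidableEq (ι μ)]

/-- The Fourier transform on the group algebra with respect to a family of matrix
representations: its `μ` component is the linear extension of `ψ μ`. -/
def fourierMap (ψ : ∀ μ, G →* Matrix (ι μ) (ι μ) ℂ) :
    MonoidAlgebra ℂ G →ₐ[ℂ] ∀ μ, Matrix (ι μ) (ι μ) ℂ :=
  AlgHom.pi fun μ => MonoidAlgebra.lift ℂ _ G (ψ μ)

theorem fourierMap_of (ψ : ∀ μ, G →* Matrix (ι μ) (ι μ) ℂ) (g : G) (μ : I) :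
    fourierMap ψ (MonoidAlgebra.of ℂ G g) μ = ψ μ g := by
  simp [fourierMap]

variable [Fintype G]

/-- The element of the group algebra that the irrep `ρ` maps to the matrix unit `E_{jl}`, given by
the Fourier inversion formula. -/
def matrixUnit {κ : Type*} [Fintype κ] [DecidableEq κ] (ρ : G →* Matrix κ κ ℂ) (j l : κ) :
    MonoidAlgebra ℂ G :=
  ((Fintype.card κ : ℂ) / (Fintype.card G : ℂ)) • ∑ g, ρ g⁻¹ l j • MonoidAlgebra.of ℂ G g

variable {ψ : ∀ μ, G →* Matrix (ι μ) (ι μ) ℂ}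

theorem fourierMap_matrixUnit_apply {κ : Type*} [Fintype κ] [DecidableEq κ]
    (ρ : G →* Matrix κ κ ℂ) (j l : κ) (μ : I) (i k : ι μ) :
    fourierMap ψ (matrixUnit ρ j l) μ i k =
      (Fintype.card κ : ℂ) / (Fintype.card G : ℂ) * ∑ g, ψ μ g i k * ρ g⁻¹ l j := by
  simp only [matrixUnit, map_smul, map_sum, Pi.smul_apply, Finset.sum_apply, fourierMap_of,
    Matrix.smul_apply, Matrix.sum_apply, smul_eq_mul, mul_comm]

variable (hirr : ∀ μ, MatIrred (ψ μ)) (hineq : ∀ μ ν, μ ≠ ν → MatInequiv (ψ μ) (ψ ν))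
include hirr hineq

theorem fourierMap_matrixUnit (ν : I) (j l : ι ν) :
    fourierMap ψ (matrixUnit (ψ ν) j l) = Pi.single ν (Matrix.single j l 1) := by
  funext μ
  ext i k
  rw [fourierMap_matrixUnit_apply]
  by_cases hμ : μ = ν
  · subst hμ
    have : Nonempty (ι μ) := ⟨j⟩
    have card_ι_ne_zero : (Fintype.card (ι μ) : ℂ) ≠ 0 := mod_cast Fintype.card_ne_zero
    have card_G_ne_zero : (Fintype.card G : ℂ) ≠ 0 := mod_cast Fintype.card_ne_zero
    rw [(hirr μ).sum_apply_mul_apply_inv, Pi.single_eq_same]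
    field_simp
  · rw [(hineq μ ν hμ).sum_apply_mul_apply_inv, Pi.single_eq_of_ne hμ, mul_zero,
      Matrix.zero_apply]

omit [Fintype G] in
theorem fourierMap_surjective [Finite G] [Finite I] : Function.Surjective (fourierMap ψ) := by
  have := Fintype.ofFinite G
  have := Fintype.ofFinite I
  refine LinearMap.range_eq_top (f := (fourierMap ψ).toLinearMap).1 <|
    (Submodule.eq_top_iff_forall_basis_mem
      (Pi.basis fun μ => Matrix.stdBasis ℂ (ι μ) (ι μ))).2 ?_
  rintro ⟨ν, j, l⟩
  exact ⟨matrixUnit (ψ ν) j l, by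
    simp [fourierMap_matrixUnit hirr hineq, Pi.basis_apply, Matrix.stdBasis_eq_single]⟩

variable [Fintype I] (hcomplete : ∑ μ, Fintype.card (ι μ) ^ 2 = Fintype.card G)
include hcomplete

theorem fourierMap_bijective : Function.Bijective (fourierMap ψ) := by
  have : FiniteDimensional ℂ (MonoidAlgebra ℂ G) :=
    Module.Finite.of_basis (MonoidAlgebra.basis G ℂ)
  have finrank_eq : Module.finrank ℂ (MonoidAlgebra ℂ G) =
      Module.finrank ℂ (∀ μ, Matrix (ι μ) (ι μ) ℂ) := by
    rw [Module.finrank_eq_card_basis (MonoidAlgebra.basis G ℂ), ← hcomplete]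
    simp [Module.finrank_pi_fintype, Module.finrank_matrix, sq]
  have surjective := fourierMap_surjective hirr hineq
  exact ⟨(LinearMap.injective_iff_surjective_of_finrank_eq_finrank finrank_eq
    (f := (fourierMap ψ).toLinearMap)).2 surjective, surjective⟩

theorem exists_basis_mul_eq_smul {z : MonoidAlgebra ℂ G} {Γ : ∀ μ, ι μ → ℂ}
    (hz : ∀ μ, fourierMap ψ z μ = Matrix.diagonal (Γ μ)) :
    ∃ b : Module.Basis ((μ : I) × ι μ × ι μ) ℂ (MonoidAlgebra ℂ G),
      ∀ k, z * b k = Γ k.1 k.2.1 • b k := by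
  let e := AlgEquiv.ofBijective (fourierMap ψ) (fourierMap_bijective hirr hineq hcomplete)
  refine ⟨(Pi.basis fun μ => Matrix.stdBasis ℂ (ι μ) (ι μ)).map e.symm.toLinearEquiv, ?_⟩
  rintro ⟨μ, i, j⟩
  have hez : e z = fun μ => Matrix.diagonal (Γ μ) := funext hz
  apply e.injective
  simp only [map_mul, map_smul, hez, Module.Basis.map_apply, AlgEquiv.toLinearEquiv_apply,
    AlgEquiv.apply_symm_apply, Pi.basis_apply, Matrix.stdBasis_eq_single]
  funext ν
  by_cases hν : ν = μ
  · subst hν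
    ext i' j'
    by_cases hi : i = i'
    · subst hi
      simp
    · simp [hi]
  · simp [Pi.single_eq_of_ne hν]

end FourierTransform

section Eigenbasis

variable {R M ι : Type*} [CommRing R] [AddCommGroup M] [Module R M]
  (b : Module.Basis ι R M) {T : Module.End R M} {Γ : ι → R} (hT : ∀ i, T (b i) = Γ i • b i)
include hT

theorem iSup_eigenspace_eq_top_of_basis : ⨆ c, T.eigenspace c = ⊤ :=
  (Submodule.eq_top_iff_forall_basis_mem b).2 fun i =>
    Submodule.mem_iSup_of_mem (Γ i) (Module.End.mem_eigenspace_iff.2 (hT i))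

theorem repr_apply_of_basis_eigenvector (v : M) (i : ι) :
    b.repr (T v) i = Γ i * b.repr v i := by
  have : (b.coord i).comp T = Γ i • b.coord i := b.ext fun j => by
    by_cases hij : j = i <;> simp [hT, hij]
  exact LinearMap.congr_fun this v

variable [IsDomain R]

theorem eigenspace_eq_span_of_basis (c : R) :
    T.eigenspace c = Submodule.span R (b '' {i | Γ i = c}) := by
  ext v
  rw [Module.End.mem_eigenspace_iff, b.mem_span_image, ← b.repr.injective.eq_iff, Finsupp.ext_iff]
  refine forall_congr' fun i => ?_
  rw [repr_apply_of_basis_eigenvector b hT, map_smul, Finsupp.smul_apply, smul_eq_mul,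
    mul_eq_mul_right_iff, Finset.mem_coe, Finsupp.mem_support_iff, Set.mem_ofPred_eq, or_comm,
    or_iff_not_imp_left]

theorem finrank_eigenspace_of_basis [Fintype ι] (c : R) :
    Module.finrank R (T.eigenspace c) = (Finset.univ.filter fun i => Γ i = c).card := by
  rw [eigenspace_eq_span_of_basis b hT, Set.image_eq_range]
  exact (finrank_span_eq_card (b.linearIndependent.comp _ Subtype.val_injective)).trans
    (Fintype.card_subtype _)

end Eigenbasis

section Transpositions

open MulAction
open Equiv (Perm)

variable {α : Type*} [DecidableEq α] {x : α}

theorem isConj_iff_isSwap {s t : Perm α} (hs : s.IsSwap) : IsConj s t ↔ t.IsSwap := by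
  obtain ⟨a, b, hab, rfl⟩ := hs
  constructor
  · intro h
    obtain ⟨g, rfl⟩ := isConj_iff.1 h
    exact ⟨g a, g b, g.injective.ne hab, (Equiv.swap_apply_apply g a b).symm⟩
  · rintro ⟨c, d, hcd, rfl⟩
    exact Perm.isConj_swap hab hcd

theorem exists_isSwap_ofSubtype_eq {s : Perm α} (hs : s.IsSwap) (hx : s x = x) :
    ∃ s' : Perm {y // y ≠ x}, s'.IsSwap ∧ Perm.ofSubtype s' = s := by
  obtain ⟨a, b, hab, rfl⟩ := hs
  have ha : a ≠ x := by
    rintro rfl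
    exact hab (by simpa using hx.symm)
  have hb : b ≠ x := by
    rintro rfl
    exact hab (by simpa using hx)
  exact ⟨Equiv.swap ⟨a, ha⟩ ⟨b, hb⟩, Perm.swap_isSwap_iff.2 (by simpa using hab),
    Perm.ofSubtype_swap_eq _ _⟩

theorem isConj_stabilizer_iff_isSwap {s t : stabilizer (Perm α) x} (hs : (s : Perm α).IsSwap) :
    IsConj s t ↔ (t : Perm α).IsSwap := by
  refine ⟨fun h => (isConj_iff_isSwap hs).1 ((stabilizer (Perm α) x).subtype.map_isConj h),
    fun ht => ?_⟩
  obtain ⟨s', hs', s'_eq⟩ := exists_isSwap_ofSubtype_eq hs s.2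
  obtain ⟨t', ht', t'_eq⟩ := exists_isSwap_ofSubtype_eq ht t.2
  obtain ⟨c, hc⟩ := isConj_iff.1 ((isConj_iff_isSwap hs').2 ht')
  refine isConj_iff.2
    ⟨⟨Perm.ofSubtype c, Perm.ofSubtype_apply_of_not_mem c (by simp)⟩, Subtype.ext ?_⟩
  simp [← s'_eq, ← t'_eq, ← hc]

theorem swap_apply_eq_of_isSwap {s : Perm α} (hs : s.IsSwap) (hx : s x ≠ x) :
    Equiv.swap (s x) x = s := by
  obtain ⟨a, b, -, rfl⟩ := hs
  rcases (Equiv.swap_apply_ne_self_iff.1 hx).2 with rfl | rfl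
  · rw [Equiv.swap_apply_left, Equiv.swap_comm]
  · rw [Equiv.swap_apply_right]

variable [Fintype α]

theorem sum_isSwap_eq_add {M : Type*} [AddCommMonoid M] (f : Perm α → M) (x : α) :
    ∑ s ∈ {s : Perm α | s.IsSwap}, f s = ∑ a with a ≠ x, f (Equiv.swap a x) +
      ∑ s ∈ {s : stabilizer (Perm α) x | (s : Perm α).IsSwap}, f s := by
  rw [← Finset.sum_filter_not_add_sum_filter _ fun s : Perm α => s x = x]
  congr 1
  · refine Finset.sum_nbij' (fun s => s x) (fun a => Equiv.swap a x) ?_ ?_ ?_ ?_ ?_ <;>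
      simp +contextual [swap_apply_eq_of_isSwap, Perm.swap_isSwap_iff]
  · refine (Finset.sum_nbij Subtype.val ?_ Subtype.val_injective.injOn ?_ fun _ _ => rfl).symm
    · exact fun s hs => by simpa using ⟨(Finset.mem_filter.1 hs).2, s.2⟩
    · intro s hs
      obtain ⟨hs, hsx⟩ : s.IsSwap ∧ s x = x := by simpa using hs
      exact ⟨⟨s, hsx⟩, by simpa using hs, rfl⟩

theorem card_isSwap :
    (Finset.univ.filter fun s : Perm α => s.IsSwap).card = (Fintype.card α).choose 2 := by
  rcases le_or_gt 2 (Fintype.card α) with hα | hα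
  · simp [Perm.isSwap_iff_cycleType, Perm.card_of_cycleType_singleton le_rfl hα]
  · rw [Nat.choose_eq_zero_of_lt hα, Finset.card_eq_zero, Finset.filter_eq_empty_iff]
    exact fun s _ hs => hα.not_ge (Perm.card_support_eq_two.2 hs ▸ Finset.card_le_univ s.support)

theorem card_stabilizer_isSwap (x : α) :
    (Finset.univ.filter fun s : stabilizer (Perm α) x => (s : Perm α).IsSwap).card =
      (Fintype.card α - 1).choose 2 := by
  have pascal : (Fintype.card α).choose 2 =
      (Fintype.card α - 1) + (Fintype.card α - 1).choose 2 := by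
    obtain ⟨n, hn⟩ := Nat.exists_eq_add_one.2 (Fintype.card_pos_iff.2 ⟨x⟩)
    simp [hn, Nat.choose_succ_succ']
  have split := sum_isSwap_eq_add (fun _ => 1) x
  simp only [← Finset.card_eq_sum_ones, card_isSwap, Finset.filter_ne',
    Finset.card_erase_of_mem (Finset.mem_univ x), Finset.card_univ] at split
  lia

end Transpositions

section JucysMurphy

variable {α : Type*} [Fintype α] [DecidableEq α]

open MulAction
open Equiv (Perm)

/-- The Jucys–Murphy element of `ℂ[S(α)]` with distinguished point `x`: the sum of the
transpositions moving `x`. -/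
def jucysMurphy (x : α) : MonoidAlgebra ℂ (Perm α) :=
  ∑ a with a ≠ x, MonoidAlgebra.of ℂ (Perm α) (Equiv.swap a x)

/-- The eigenvalue `γ_μ(α)` of the Jucys–Murphy element attached to an irrep `ρ` of `S(α)` and a
component `φ` of its restriction to the stabilizer of `x`; the characters are evaluated at a
transposition `t` fixing `x`. -/
def branchingEigenvalue {ι κ : Type*} [Fintype ι] [DecidableEq ι] [Fintype κ] [DecidableEq κ]
    {x : α} (t : stabilizer (Perm α) x) (ρ : Perm α →* Matrix ι ι ℂ)
    (φ : stabilizer (Perm α) x →* Matrix κ κ ℂ) : ℂ :=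
  ((Fintype.card α).choose 2 : ℂ) * (ρ t).trace / (Fintype.card ι : ℂ) -
    ((Fintype.card α - 1).choose 2 : ℂ) * (φ t).trace / (Fintype.card κ : ℂ)

variable {x : α} {t : stabilizer (Perm α) x} (ht : (t : Perm α).IsSwap)
include ht

theorem MatIrred.sum_isSwap {ι : Type*} [Fintype ι] [DecidableEq ι] {ρ : Perm α →* Matrix ι ι ℂ}
    (hρ : MatIrred ρ) :
    ∑ s ∈ {s : Perm α | s.IsSwap}, ρ s =
      (((Fintype.card α).choose 2 : ℂ) * (ρ t).trace / (Fintype.card ι : ℂ)) •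
        (1 : Matrix ι ι ℂ) := by
  simpa only [isConj_iff_isSwap ht, card_isSwap] using hρ.sum_isConj (t : Perm α)

theorem MatIrred.sum_stabilizer_isSwap {κ : Type*} [Fintype κ] [DecidableEq κ]
    {φ : stabilizer (Perm α) x →* Matrix κ κ ℂ} (hφ : MatIrred φ) :
    ∑ s ∈ {s : stabilizer (Perm α) x | (s : Perm α).IsSwap}, φ s =
      (((Fintype.card α - 1).choose 2 : ℂ) * (φ t).trace / (Fintype.card κ : ℂ)) •
        (1 : Matrix κ κ ℂ) := by
  simpa only [isConj_stabilizer_iff_isSwap ht, card_stabilizer_isSwap] using hφ.sum_isConj t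

theorem sum_swap_eq_diagonal_branchingEigenvalue {B : Type*} [Fintype B] [DecidableEq B]
    {κ : B → Type*} [∀ b, Fintype (κ b)] [∀ b, DecidableEq (κ b)]
    {ρ : Perm α →* Matrix ((b : B) × κ b) ((b : B) × κ b) ℂ}
    {φ : ∀ b, stabilizer (Perm α) x →* Matrix (κ b) (κ b) ℂ}
    (hρ : MatIrred ρ) (hφ : ∀ b, MatIrred (φ b))
    (hblock : ∀ s : stabilizer (Perm α) x,
      ρ (s : Perm α) = Matrix.blockDiagonal' fun b => φ b s) :
    ∑ a with a ≠ x, ρ (Equiv.swap a x) =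
      Matrix.diagonal fun i => branchingEigenvalue t ρ (φ i.1) := by
  have sum_stabilizer : ∑ s ∈ {s : stabilizer (Perm α) x | (s : Perm α).IsSwap}, ρ s =
      Matrix.diagonal fun i : (b : B) × κ b =>
        ((Fintype.card α - 1).choose 2 : ℂ) * (φ i.1 t).trace / (Fintype.card (κ i.1) : ℂ) := by
    simp only [hblock]
    rw [← Matrix.blockDiagonal'_diagonal fun b (_ : κ b) =>
      ((Fintype.card α - 1).choose 2 : ℂ) * (φ b t).trace / (Fintype.card (κ b) : ℂ)]
    refine (map_sum (Matrix.blockDiagonal'AddMonoidHom κ κ ℂ) (fun s b => φ b s) _).symm.trans ?_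
    refine congrArg Matrix.blockDiagonal' (funext fun b => ?_)
    rw [Finset.sum_apply, (hφ b).sum_stabilizer_isSwap ht, Matrix.smul_one_eq_diagonal]
  rw [eq_sub_of_add_eq (sum_isSwap_eq_add ρ x).symm, hρ.sum_isSwap ht, sum_stabilizer,
    Matrix.smul_one_eq_diagonal, Matrix.diagonal_sub]
  rfl

theorem jucys_murphy_regular_spectrum_general {I : Type*} [Fintype I] {B : I → Type*}
    [∀ μ, Fintype (B μ)] [∀ μ, DecidableEq (B μ)] {κ : ∀ μ, B μ → Type*}
    [∀ μ b, Fintype (κ μ b)] [∀ μ b, DecidableEq (κ μ b)]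
    {φ : ∀ (μ : I) (b : B μ), stabilizer (Perm α) x →* Matrix (κ μ b) (κ μ b) ℂ}
    {ψ : ∀ μ : I, Perm α →* Matrix ((b : B μ) × κ μ b) ((b : B μ) × κ μ b) ℂ}
    (hψ : ∀ μ, MatIrred (ψ μ))
    (hblock : ∀ μ (s : stabilizer (Perm α) x),
      ψ μ (s : Perm α) = Matrix.blockDiagonal' fun b => φ μ b s)
    (hφ : ∀ μ b, MatIrred (φ μ b))
    (hineq : ∀ μ ν, μ ≠ ν → MatInequiv (ψ μ) (ψ ν))
    (hcomplete : ∑ μ, Fintype.card ((b : B μ) × κ μ b) ^ 2 = Fintype.card (Perm α)) :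
    (⨆ c : ℂ, Module.End.eigenspace (LinearMap.mulLeft ℂ (jucysMurphy x)) c) = ⊤ ∧
    ∀ c : ℂ, Module.finrank ℂ (Module.End.eigenspace (LinearMap.mulLeft ℂ (jucysMurphy x)) c) =
      ∑ μ, ∑ b with branchingEigenvalue t (ψ μ) (φ μ b) = c,
        Fintype.card ((b : B μ) × κ μ b) * Fintype.card (κ μ b) := by
  have diagonal : ∀ μ, fourierMap ψ (jucysMurphy x) μ =
      Matrix.diagonal fun i => branchingEigenvalue t (ψ μ) (φ μ i.1) := fun μ => by
    simp only [jucysMurphy, map_sum, Finset.sum_apply, fourierMap_of]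
    exact sum_swap_eq_diagonal_branchingEigenvalue ht (hψ μ) (hφ μ) (hblock μ)
  obtain ⟨b, hb⟩ := exists_basis_mul_eq_smul hψ hineq hcomplete diagonal
  refine ⟨iSup_eigenspace_eq_top_of_basis b hb, fun c => ?_⟩
  rw [finrank_eigenspace_of_basis (T := LinearMap.mulLeft ℂ (jucysMurphy x)) b hb]
  simp only [Finset.card_filter, Fintype.sum_sigma, Fintype.sum_prod_type, Finset.sum_filter]
  refine Finset.sum_congr rfl fun μ _ => Finset.sum_congr rfl fun b _ => ?_
  split_ifs <;> simp [mul_comm]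

end JucysMurphy

/-- in the regular representation of `ℂ[S(m)]` the Jucys–Murphy element
`J_m = Σ_a (a m)` acts diagonalizably with eigenvalues
`γ_μ(α) = C(m,2)·χ^μ((12))/d_μ − C(m-1,2)·χ^α((12))/d_α`
(over all irreps `μ` of `S(m)`, presented as PRIRs w.r.t. `S(m-1)` with multiplicity-free
restriction with blocks `α`), the eigenvalue `γ_μ(α)` occurring with multiplicity
`d_μ·d_α`. -/
theorem jucys_murphy_regular_spectrum {m : ℕ} (hm : 3 ≤ m)
    (x a0 a1 : Fin m) (hx : (x : ℕ) = m - 1) (ha0 : (a0 : ℕ) = 0) (ha1 : (a1 : ℕ) = 1)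
    (hmem : Equiv.swap a0 a1 ∈ MulAction.stabilizer (Equiv.Perm (Fin m)) x)
    -- a complete set of pairwise inequivalent irreps of S(m), in PRIR form w.r.t. the
    -- stabilizer of x
    {I : Type*} [Fintype I] (B : I → Type*)
    [∀ μ, Fintype (B μ)] [∀ μ, DecidableEq (B μ)] (dB : ∀ μ, B μ → ℕ)
    (φ : ∀ (μ : I) (b : B μ), (MulAction.stabilizer (Equiv.Perm (Fin m)) x) →*
        Matrix (Fin (dB μ b)) (Fin (dB μ b)) ℂ)
    (ψ : ∀ μ : I, Equiv.Perm (Fin m) →*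
        Matrix ((b : B μ) × Fin (dB μ b)) ((b : B μ) × Fin (dB μ b)) ℂ)
    (hψu : ∀ μ g, (ψ μ g)ᴴ * ψ μ g = 1) (hψirr : ∀ μ, MatIrred (ψ μ))
    (hblock : ∀ μ (h : MulAction.stabilizer (Equiv.Perm (Fin m)) x),
        ψ μ (h : Equiv.Perm (Fin m)) = Matrix.blockDiagonal' (fun b => φ μ b h))
    (hφirr : ∀ μ b, MatIrred (φ μ b))
    (hmf : ∀ μ (b b' : B μ), b ≠ b' → MatInequiv (φ μ b) (φ μ b'))
    (hineq : ∀ μ ν, μ ≠ ν → MatInequiv (ψ μ) (ψ ν))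
    (hcomplete : ∑ μ : I, (Fintype.card ((b : B μ) × Fin (dB μ b))) ^ 2
        = Fintype.card (Equiv.Perm (Fin m)))
    -- the Jucys-Murphy element and left multiplication by it on ℂ[S(m)]
    (J : MonoidAlgebra ℂ (Equiv.Perm (Fin m)))
    (hJ : J = ∑ a ∈ Finset.univ.filter (fun a : Fin m => a ≠ x),
        MonoidAlgebra.of ℂ (Equiv.Perm (Fin m)) (Equiv.swap a x))
    -- the eigenvalues γ_μ(α)
    (γ : ∀ μ : I, B μ → ℂ)
    (hγ : ∀ μ b, γ μ b =
        (m.choose 2 : ℂ) * Matrix.trace (ψ μ (Equiv.swap a0 a1)) /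
            (Fintype.card ((b : B μ) × Fin (dB μ b)) : ℂ) -
          ((m - 1).choose 2 : ℂ) * Matrix.trace (φ μ b ⟨Equiv.swap a0 a1, hmem⟩) /
            (dB μ b : ℂ)) :
    ((⨆ c : ℂ, Module.End.eigenspace (LinearMap.mulLeft ℂ J) c) = ⊤) ∧
    (∀ c : ℂ, Module.finrank ℂ (Module.End.eigenspace (LinearMap.mulLeft ℂ J) c)
        = ∑ μ : I, ∑ b ∈ Finset.univ.filter (fun b : B μ => γ μ b = c),
            Fintype.card ((b : B μ) × Fin (dB μ b)) * dB μ b) := by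
  have a0_ne_a1 : a0 ≠ a1 := by rintro rfl; lia
  obtain rfl : γ = fun μ b => branchingEigenvalue ⟨Equiv.swap a0 a1, hmem⟩ (ψ μ) (φ μ b) := by
    funext μ b
    simp [hγ, branchingEigenvalue]
  obtain rfl : J = jucysMurphy x := hJ
  simpa only [Fintype.card_fin] using jucys_murphy_regular_spectrum_general
    (t := ⟨Equiv.swap a0 a1, hmem⟩) (Equiv.Perm.swap_isSwap_iff.2 a0_ne_a1)
    hψirr hblock hφirr hineq hcomplete
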